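/- Let n ≥ 3, m ≥ 1, and let F : B^n → R^m be a bounded harmonic mapping given as the Poisson integral F(x) = ∫_{S^{n−1}} P(x,ζ) ψ(ζ) dσ(ζ) of a bounded measurable ψ : S^{n−1} → R^m with |ψ| ≤ ‖F‖_∞ a.e. Then for all x ∈ B^n, |F(x) − ((1−|x|)/(1+|x|)^{n−1}) F(0)| ≤ ‖F‖_∞ (1 − (1−|x|)/(1+|x|)^{n−1}). -/

import Mathlib

open Metric MeasureTheory

/-- The normalized (total mass one) surface measure on the unit sphere of `ℝⁿ`. -/
noncomputable def sphereMeasureNormalized (n : ℕ) :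
    Measure (sphere (0 : EuclideanSpace ℝ (Fin n)) 1) :=
  ((volume : Measure (EuclideanSpace ℝ (Fin n))).toSphere Set.univ)⁻¹ •
    (volume : Measure (EuclideanSpace ℝ (Fin n))).toSphere

/-- The Poisson kernel `P(x,ζ) = (1-|x|²)/|x-ζ|ⁿ` of the unit ball `Bⁿ`. -/
noncomputable def poissonKer (n : ℕ) (x ζ : EuclideanSpace ℝ (Fin n)) : ℝ :=
  (1 - ‖x‖ ^ 2) / ‖x - ζ‖ ^ n

open Module Set

section PoissonKernelMass

lemma one_sub_norm_sq_pos {E : Type*} [NormedAddCommGroup E] {x : E} (hx : ‖x‖ < 1) :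
    0 < 1 - ‖x‖ ^ 2 := by
  nlinarith [norm_nonneg x]

lemma one_sub_norm_le_norm_sub {E : Type*} [NormedAddCommGroup E] (x : E)
    (ζ : sphere (0 : E) 1) : 1 - ‖x‖ ≤ ‖x - ζ‖ := by
  have h := norm_sub_norm_le (ζ : E) x
  rwa [norm_sub_rev, norm_eq_of_mem_sphere ζ] at h

variable {E : Type*} [NormedAddCommGroup E] [InnerProductSpace ℝ E]

/-- The discriminant root of the quadratic equation `‖w + s • x‖ = s` in `s`. -/
noncomputable def discrRoot (x w : E) : ℝ :=
  √(inner ℝ x w ^ 2 + (1 - ‖x‖ ^ 2) * ‖w‖ ^ 2)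

/-- The nonnegative solution `s` of `‖w + s • x‖ = s`. -/
noncomputable def shiftLength (x w : E) : ℝ :=
  (1 - ‖x‖ ^ 2)⁻¹ * (inner ℝ x w + discrRoot x w)

lemma discr_pos {x w : E} (hx : ‖x‖ < 1) (hw : w ≠ 0) :
    0 < inner ℝ x w ^ 2 + (1 - ‖x‖ ^ 2) * ‖w‖ ^ 2 := by
  have := one_sub_norm_sq_pos hx
  have := norm_pos_iff.2 hw
  positivity

lemma discrRoot_neg (x w : E) : discrRoot x (-w) = discrRoot x w := by
  simp [discrRoot, inner_neg_right]

lemma abs_inner_div_discrRoot_le_one {x : E} (hx : ‖x‖ < 1) (w : E) :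
    |inner ℝ x w / discrRoot x w| ≤ 1 := by
  rw [abs_div, discrRoot, abs_of_nonneg (Real.sqrt_nonneg _)]
  refine div_le_one_of_le₀ (Real.abs_le_sqrt ?_) (Real.sqrt_nonneg _)
  have := one_sub_norm_sq_pos hx
  nlinarith [mul_nonneg this.le (sq_nonneg ‖w‖)]

/-- The map `w ↦ w + shiftLength x w • x` is a left inverse of `y ↦ y - ‖y‖ • x`. -/
lemma shiftLength_sub_norm_smul {x : E} (hx : ‖x‖ < 1) (y : E) :
    shiftLength x (y - ‖y‖ • x) = ‖y‖ := by
  have hpos := one_sub_norm_sq_pos hx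
  have hcs : inner ℝ x y ≤ ‖y‖ :=
    (real_inner_le_norm x y).trans (mul_le_of_le_one_left (norm_nonneg y) hx.le)
  have hsq : inner ℝ x (y - ‖y‖ • x) ^ 2 + (1 - ‖x‖ ^ 2) * ‖y - ‖y‖ • x‖ ^ 2
      = (‖y‖ - inner ℝ x y) ^ 2 := by
    rw [norm_sub_sq_real, inner_sub_right, real_inner_smul_right, real_inner_smul_right,
      real_inner_self_eq_norm_sq, norm_smul, norm_norm, real_inner_comm]
    ring
  rw [shiftLength, discrRoot, hsq, Real.sqrt_sq (by linarith), inner_sub_right,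
    real_inner_smul_right, real_inner_self_eq_norm_sq]
  field_simp
  ring

lemma hasFDerivAt_shiftLength {x w : E} (hx : ‖x‖ < 1) (hw : w ≠ 0) :
    HasFDerivAt (shiftLength x) ((1 - ‖x‖ ^ 2)⁻¹ • (innerSL ℝ x +
      (1 / (2 * discrRoot x w)) • ((2 * inner ℝ x w) • innerSL ℝ x +
        (2 * (1 - ‖x‖ ^ 2)) • innerSL ℝ w))) w := by
  have hin : HasFDerivAt (fun v ↦ inner ℝ x v) (innerSL ℝ x) w := (innerSL ℝ x).hasFDerivAt
  have hdiscr : HasFDerivAt (fun v ↦ inner ℝ x v ^ 2 + (1 - ‖x‖ ^ 2) * ‖v‖ ^ 2)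
      ((2 * inner ℝ x w) • innerSL ℝ x + (2 * (1 - ‖x‖ ^ 2)) • innerSL ℝ w) w := by
    refine ((hin.pow 2).add
      ((hasFDerivAt_id w).norm_sq.const_mul (1 - ‖x‖ ^ 2))).congr_fderiv ?_
    ext v
    simp
    ring
  exact (hin.add (hdiscr.sqrt (discr_pos hx hw).ne')).const_mul _

variable [FiniteDimensional ℝ E]

lemma det_id_add_smulRight (f : E →L[ℝ] ℝ) (v : E) :
    (ContinuousLinearMap.id ℝ E + f.smulRight v).det = 1 + f v := by
  have h : ((ContinuousLinearMap.id ℝ E + f.smulRight v : E →L[ℝ] E) : E →ₗ[ℝ] E)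
      = LinearMap.transvection (f : E →ₗ[ℝ] ℝ) v := by
    ext u
    simp [LinearMap.transvection.apply]
  rw [ContinuousLinearMap.det, h, LinearMap.transvection.det]
  rfl

variable [MeasurableSpace E] [BorelSpace E] (μ : Measure E) [μ.IsAddHaarMeasure]

lemma lintegral_ball_one_add_inner_div {x : E} (hx : ‖x‖ < 1) :
    ∫⁻ w in ball (0 : E) 1, ENNReal.ofReal
        ((1 - ‖x‖ ^ 2)⁻¹ * (1 + inner ℝ x w / discrRoot x w)) ∂μ
      = ENNReal.ofReal (1 - ‖x‖ ^ 2)⁻¹ * μ (ball 0 1) := by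
  have hpos := one_sub_norm_sq_pos hx
  have hbound := abs_inner_div_discrRoot_le_one hx
  have hmeas : Measurable fun w : E ↦ inner ℝ x w / discrRoot x w := by
    unfold discrRoot
    fun_prop
  have : IsFiniteMeasure (μ.restrict (ball (0 : E) 1)) := ⟨by simpa using measure_ball_lt_top⟩
  have hint : Integrable (fun w : E ↦ inner ℝ x w / discrRoot x w) (μ.restrict (ball 0 1)) :=
    .of_bound hmeas.aestronglyMeasurable 1 (.of_forall hbound)
  have hodd : ∫ w in ball (0 : E) 1, inner ℝ x w / discrRoot x w ∂μ = 0 := by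
    have h := integral_neg_eq_self
      ((ball (0 : E) 1).indicator fun w ↦ inner ℝ x w / discrRoot x w) μ
    have hneg : (fun w ↦ (ball (0 : E) 1).indicator
        (fun w ↦ inner ℝ x w / discrRoot x w) (-w)) =
        fun w ↦ -(ball (0 : E) 1).indicator (fun w ↦ inner ℝ x w / discrRoot x w) w := by
      ext w
      by_cases hw : ‖w‖ < 1 <;>
        simp [indicator, hw, discrRoot_neg, inner_neg_right, neg_div]
    rw [hneg, integral_neg, integral_indicator measurableSet_ball] at h
    linarith
  rw [← ofReal_integral_eq_lintegral_ofReal, integral_const_mul,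
    integral_add (integrable_const _) hint, hodd, add_zero, ENNReal.ofReal_mul (by positivity)]
  · simp [measureReal_def, measure_ball_lt_top.ne]
  · exact ((integrable_const _).add hint).const_mul _
  · refine .of_forall fun w ↦ mul_nonneg (by positivity) ?_
    linarith [neg_le_of_abs_le (hbound w)]

lemma measure_norm_sub_norm_smul_lt_one_le {x : E} (hx : ‖x‖ < 1) :
    μ {y : E | y ≠ 0 ∧ ‖y - ‖y‖ • x‖ < 1} ≤
      ENNReal.ofReal (1 - ‖x‖ ^ 2)⁻¹ * μ (ball 0 1) := by
  have hpos := one_sub_norm_sq_pos hx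
  set s : Set E := ball 0 1 \ {0}
  have hsub : {y : E | y ≠ 0 ∧ ‖y - ‖y‖ • x‖ < 1} ⊆ (fun w ↦ w + shiftLength x w • x) '' s := by
    rintro y ⟨hy, hy1⟩
    refine ⟨y - ‖y‖ • x, ⟨by simpa using hy1, fun h ↦ ?_⟩, ?_⟩
    · have hn : ‖y‖ = ‖y‖ * ‖x‖ := by
        conv_lhs => rw [sub_eq_zero.1 h, norm_smul, norm_norm]
      nlinarith [norm_pos_iff.2 hy]
    · simp [shiftLength_sub_norm_smul hx]
  refine (measure_mono hsub).trans ?_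
  refine (addHaar_image_le_lintegral_abs_det_fderiv μ
    (measurableSet_ball.diff (measurableSet_singleton _)) fun w hw ↦
      ((hasFDerivAt_id w).add
        ((hasFDerivAt_shiftLength hx hw.2).smul_const x)).hasFDerivWithinAt).trans ?_
  rw [← lintegral_ball_one_add_inner_div μ hx]
  refine le_trans (le_of_eq (setLIntegral_congr_fun
    (measurableSet_ball.diff (measurableSet_singleton _)) fun w hw ↦ ?_))
    (lintegral_mono_set sdiff_subset)
  have hq : 0 < discrRoot x w := Real.sqrt_pos.2 (discr_pos hx hw.2)
  have hb := neg_le_of_abs_le (abs_inner_div_discrRoot_le_one hx w)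
  have hdet : 1 + ((1 - ‖x‖ ^ 2)⁻¹ • (innerSL ℝ x +
      (1 / (2 * discrRoot x w)) • ((2 * inner ℝ x w) • innerSL ℝ x +
        (2 * (1 - ‖x‖ ^ 2)) • innerSL ℝ w))) x
      = (1 - ‖x‖ ^ 2)⁻¹ * (1 + inner ℝ x w / discrRoot x w) := by
    simp only [smul_apply, add_apply, innerSL_apply_apply,
      real_inner_self_eq_norm_sq, smul_eq_mul, real_inner_comm w x]
    field_simp
    ring
  rw [det_id_add_smulRight, hdet, abs_of_nonneg]
  exact mul_nonneg (by positivity) (by linarith)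

lemma lintegral_toSphere_inv_norm_sub_pow [Nontrivial E] {x : E} (hx : ‖x‖ < 1) :
    ∫⁻ ζ : sphere (0 : E) 1, ENNReal.ofReal (1 / ‖x - ζ‖ ^ finrank ℝ E) ∂μ.toSphere
      = finrank ℝ E * μ {y : E | y ≠ 0 ∧ ‖y - ‖y‖ • x‖ < 1} := by
  have hd : finrank ℝ E - 1 + 1 = finrank ℝ E := Nat.sub_add_cancel finrank_pos
  have hnorm (ζ : sphere (0 : E) 1) : 0 < ‖x - ζ‖ := by
    linarith [one_sub_norm_le_norm_sub x ζ]
  set S : Set (sphere (0 : E) 1 × Ioi (0 : ℝ)) := {p | p.2.1 * ‖x - p.1‖ < 1}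
  have hS : MeasurableSet S :=
    (isOpen_lt (by fun_prop) continuous_const).measurableSet
  have hpre : homeomorphUnitSphereProd E ⁻¹' S
      = ((↑) : ({0}ᶜ : Set E) → E) ⁻¹' {y : E | y ≠ 0 ∧ ‖y - ‖y‖ • x‖ < 1} := by
    ext ⟨y, hy⟩
    have hy0 : y ≠ 0 := hy
    have hy' : 0 < ‖y‖ := norm_pos_iff.2 hy0
    have : ‖y‖ * ‖x - ‖y‖⁻¹ • y‖ = ‖y - ‖y‖ • x‖ := by
      nth_rw 1 [← norm_norm y]
      rw [← norm_smul, smul_sub, smul_inv_smul₀ hy'.ne', norm_sub_rev]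
    simp [S, hy0, this]
  have hvol : μ {y : E | y ≠ 0 ∧ ‖y - ‖y‖ • x‖ < 1}
      = (μ.toSphere.prod (Measure.volumeIoiPow (finrank ℝ E - 1))) S := by
    rw [← μ.measurePreserving_homeomorphUnitSphereProd.measure_preimage hS.nullMeasurableSet,
      hpre, comap_subtype_coe_apply (measurableSet_singleton _).compl,
      Subtype.image_preimage_coe, inter_eq_right.2 fun y hy ↦ hy.1]
  rw [hvol, Measure.prod_apply hS, ← lintegral_const_mul _ (measurable_measure_prodMk_left hS)]
  refine lintegral_congr fun ζ ↦ ?_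
  have hslice : Prod.mk ζ ⁻¹' S = Iio ⟨1 / ‖x - ζ‖, one_div_pos.2 (hnorm ζ)⟩ := by
    ext t
    simp only [S, mem_preimage, mem_ofPred_eq, mem_Iio, ← Subtype.coe_lt_coe]
    rw [lt_div_iff₀ (hnorm ζ)]
  have hcast : ((finrank ℝ E - 1 : ℕ) : ℝ) + 1 = finrank ℝ E := by exact_mod_cast hd
  have hd0 : (0 : ℝ) < finrank ℝ E := by exact_mod_cast finrank_pos
  rw [hslice, Measure.volumeIoiPow_apply_Iio, hd, hcast, ← ENNReal.ofReal_natCast,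
    ← ENNReal.ofReal_mul hd0.le]
  congr 1
  rw [one_div_pow]
  field_simp

end PoissonKernelMass

lemma isProbabilityMeasure_sphereMeasureNormalized {n : ℕ} (hn : n ≠ 0) :
    IsProbabilityMeasure (sphereMeasureNormalized n) := by
  have : Nonempty (Fin n) := ⟨⟨0, Nat.pos_of_ne_zero hn⟩⟩
  refine ⟨?_⟩
  rw [sphereMeasureNormalized, Measure.smul_apply, smul_eq_mul]
  exact ENNReal.inv_mul_cancel
    (Measure.measure_univ_ne_zero.2 (Measure.toSphere_ne_zero _)) (measure_ne_top _ _)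

lemma continuous_poissonKer {n : ℕ} {x : EuclideanSpace ℝ (Fin n)} (hx : ‖x‖ < 1) :
    Continuous fun ζ : sphere (0 : EuclideanSpace ℝ (Fin n)) 1 ↦ poissonKer n x ζ := by
  unfold poissonKer
  refine continuous_const.div (by fun_prop) fun ζ ↦ pow_ne_zero _ ?_
  linarith [one_sub_norm_le_norm_sub x ζ]

lemma le_poissonKer {n : ℕ} (hn : n ≠ 0) {x : EuclideanSpace ℝ (Fin n)} (hx : ‖x‖ < 1)
    (ζ : sphere (0 : EuclideanSpace ℝ (Fin n)) 1) :
    (1 - ‖x‖) / (1 + ‖x‖) ^ (n - 1) ≤ poissonKer n x ζ := by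
  have hle : ‖x - ζ‖ ≤ 1 + ‖x‖ := by
    have h := norm_sub_le x (ζ : EuclideanSpace ℝ (Fin n))
    rw [norm_eq_of_mem_sphere ζ] at h
    linarith
  have hpos : 0 < ‖x - ζ‖ := by linarith [one_sub_norm_le_norm_sub x ζ]
  have h1 : 0 < 1 + ‖x‖ := by positivity
  calc (1 - ‖x‖) / (1 + ‖x‖) ^ (n - 1)
      = (1 - ‖x‖ ^ 2) / (1 + ‖x‖) ^ n := by
        rw [← mul_pow_sub_one hn]
        field_simp
        ring
    _ ≤ poissonKer n x ζ := by
        have := one_sub_norm_sq_pos hx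
        unfold poissonKer
        gcongr

lemma integral_poissonKer_le_one {n : ℕ} (hn : n ≠ 0) {x : EuclideanSpace ℝ (Fin n)}
    (hx : ‖x‖ < 1) :
    ∫ ζ, poissonKer n x (ζ : EuclideanSpace ℝ (Fin n)) ∂(sphereMeasureNormalized n) ≤ 1 := by
  have : Nonempty (Fin n) := ⟨⟨0, Nat.pos_of_ne_zero hn⟩⟩
  have hpos := one_sub_norm_sq_pos hx
  have hnonneg (ζ : sphere (0 : EuclideanSpace ℝ (Fin n)) 1) : 0 ≤ poissonKer n x ζ :=
    div_nonneg hpos.le (by positivity)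
  rw [integral_eq_lintegral_of_nonneg_ae (.of_forall hnonneg)
    (continuous_poissonKer hx).aestronglyMeasurable]
  refine ENNReal.toReal_le_of_le_ofReal zero_le_one ?_
  set μ : Measure (EuclideanSpace ℝ (Fin n)) := volume
  have hmass := lintegral_toSphere_inv_norm_sub_pow μ hx
  have hvol := measure_norm_sub_norm_smul_lt_one_le μ hx
  have huniv := μ.toSphere_apply_univ
  rw [finrank_euclideanSpace_fin] at hmass huniv
  have hker (ζ : sphere (0 : EuclideanSpace ℝ (Fin n)) 1) :
      ENNReal.ofReal (poissonKer n x ζ)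
        = ENNReal.ofReal (1 - ‖x‖ ^ 2) * ENNReal.ofReal (1 / ‖x - ζ‖ ^ n) := by
    rw [← ENNReal.ofReal_mul hpos.le, poissonKer, mul_one_div]
  simp_rw [hker]
  rw [lintegral_const_mul' _ _ ENNReal.ofReal_ne_top, sphereMeasureNormalized,
    lintegral_smul_measure, smul_eq_mul, hmass, ENNReal.ofReal_one]
  calc ENNReal.ofReal (1 - ‖x‖ ^ 2) * ((μ.toSphere univ)⁻¹ *
        (n * μ {y | y ≠ 0 ∧ ‖y - ‖y‖ • x‖ < 1}))
      ≤ ENNReal.ofReal (1 - ‖x‖ ^ 2) * ((μ.toSphere univ)⁻¹ *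
        (n * (ENNReal.ofReal (1 - ‖x‖ ^ 2)⁻¹ * μ (ball 0 1)))) := by gcongr
    _ = (ENNReal.ofReal (1 - ‖x‖ ^ 2) * ENNReal.ofReal (1 - ‖x‖ ^ 2)⁻¹) *
        ((μ.toSphere univ)⁻¹ * μ.toSphere univ) := by
        rw [huniv]
        ring
    _ ≤ 1 := by
        rw [← ENNReal.ofReal_mul hpos.le, mul_inv_cancel₀ hpos.ne', ENNReal.ofReal_one, one_mul]
        exact ENNReal.inv_mul_le_one _

theorem harmonic_schwarz_explicit (n m : ℕ) (hn : 3 ≤ n) (hm : 1 ≤ m)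
    (ψ : sphere (0 : EuclideanSpace ℝ (Fin n)) 1 → EuclideanSpace ℝ (Fin m))
    (hψmeas : Measurable ψ)
    (F : EuclideanSpace ℝ (Fin n) → EuclideanSpace ℝ (Fin m))
    (hF : ∀ x ∈ ball (0 : EuclideanSpace ℝ (Fin n)) 1,
      F x = ∫ ζ, poissonKer n x (ζ : EuclideanSpace ℝ (Fin n)) • ψ ζ
        ∂(sphereMeasureNormalized n))
    (M : ℝ) (hMF : ∀ x ∈ ball (0 : EuclideanSpace ℝ (Fin n)) 1, ‖F x‖ ≤ M)
    (hMψ : ∀ᵐ ζ ∂(sphereMeasureNormalized n), ‖ψ ζ‖ ≤ M)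
    (x : EuclideanSpace ℝ (Fin n)) (hx : ‖x‖ < 1) :
    ‖F x - ((1 - ‖x‖) / (1 + ‖x‖) ^ (n - 1)) • F 0‖ ≤
      M * (1 - (1 - ‖x‖) / (1 + ‖x‖) ^ (n - 1)) := by
  have hn0 : n ≠ 0 := by lia
  have := isProbabilityMeasure_sphereMeasureNormalized hn0
  set σ := sphereMeasureNormalized n
  set c : ℝ := (1 - ‖x‖) / (1 + ‖x‖) ^ (n - 1)
  have hM : 0 ≤ M := (norm_nonneg _).trans (hMF 0 (mem_ball_self one_pos))
  have hψint : Integrable ψ σ := .of_bound hψmeas.aestronglyMeasurable M hMψ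
  have hcont := continuous_poissonKer hx
  have hPint : Integrable (fun ζ : sphere (0 : EuclideanSpace ℝ (Fin n)) 1 ↦ poissonKer n x ζ) σ :=
    hcont.integrable_of_hasCompactSupport (HasCompactSupport.of_compactSpace _)
  have hPψint : Integrable (fun ζ : sphere (0 : EuclideanSpace ℝ (Fin n)) 1 ↦
      poissonKer n x ζ • ψ ζ) σ :=
    hPint.smul_bdd M hψmeas.aestronglyMeasurable hMψ
  have hF0 : F 0 = ∫ ζ, ψ ζ ∂σ := by
    rw [hF 0 (mem_ball_self one_pos)]
    simp [poissonKer]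
  have hdiff : F x - c • F 0 = ∫ ζ, (poissonKer n x ζ - c) • ψ ζ ∂σ := by
    rw [hF x (by simpa using hx), hF0, ← integral_smul, ← integral_sub hPψint (hψint.fun_smul c)]
    simp_rw [sub_smul]
  calc ‖F x - c • F 0‖
      ≤ ∫ ζ : sphere (0 : EuclideanSpace ℝ (Fin n)) 1, M * (poissonKer n x ζ - c) ∂σ := by
        rw [hdiff]
        refine norm_integral_le_of_norm_le ((hPint.sub (integrable_const c)).const_mul M) ?_
        filter_upwards [hMψ] with ζ hζ
        have hc : 0 ≤ poissonKer n x ζ - c := sub_nonneg.2 (le_poissonKer hn0 hx ζ)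
        rw [norm_smul, Real.norm_of_nonneg hc, mul_comm]
        gcongr
    _ = M * (∫ ζ : sphere (0 : EuclideanSpace ℝ (Fin n)) 1, poissonKer n x ζ ∂σ - c) := by
        rw [integral_const_mul, integral_sub hPint (integrable_const c)]
        simp
    _ ≤ M * (1 - c) := by
        gcongr
        exact integral_poissonKer_le_one hn0 hx
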